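/- In the mixture design with n = n₁ + n₂ and design matrix X ∈ ℝ^{n×2} with X_{i1} = x_i, X_{i2} = 0 for i ≤ n₁ and X_{i1} = 0, X_{i2} = x_i for i > n₁, assuming x̄²₁ = (1/n₁)Σ_{i≤n₁}x_i² > 0 and x̄²₂ = (1/n₂)Σ_{i>n₁}x_i² > 0, the least squares estimates under the alternative (β̂ with coordinates β̂₁ = x̄y₁/x̄²₁, β̂₂ = x̄y₂/x̄²₂) and under the null β₁ = β₂ (β̂^N with both coordinates equal to x̄y/x̄²) satisfy ‖Xβ̂ − Xβ̂^N‖² = (n₁x̄²₁ · n₂x̄²₂)/(n·x̄²) · (β̂₁ − β̂₂)². -/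

import Mathlib

open MeasureTheory ProbabilityTheory Filter Topology NNReal

/-! The two columns of the design matrix are orthogonal and add up to `x`. For orthogonal regressors
`u` and `v`, the coefficient of `y` on `u + v` is the mean of the coefficients on `u` and on `v`
with weights `u ⬝ᵥ u` and `v ⬝ᵥ v`. So `‖Xβ̂ - Xβ̂^N‖²` is the weighted sum of squared deviations of
two numbers from their weighted mean, and dividing averages by one another cancels the group
sizes. -/

section OrthogonalRegressors

open Matrix

variable {ι R K : Type*} [Fintype ι]

theorem add_dotProduct_add_self_of_dotProduct_eq_zero [CommSemiring R] {u v : ι → R}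
    (huv : u ⬝ᵥ v = 0) : (u + v) ⬝ᵥ (u + v) = u ⬝ᵥ u + v ⬝ᵥ v := by
  have hvu : v ⬝ᵥ u = 0 := dotProduct_comm v u ▸ huv
  simp only [add_dotProduct, dotProduct_add, huv, hvu, add_zero, zero_add]

theorem mulVec_dotProduct_mulVec_self_of_orthogonal_cols [CommSemiring R]
    {X : Matrix ι (Fin 2) R} (hX : X.col 0 ⬝ᵥ X.col 1 = 0) (z : Fin 2 → R) :
    X *ᵥ z ⬝ᵥ X *ᵥ z = X.col 0 ⬝ᵥ X.col 0 * z 0 ^ 2 + X.col 1 ⬝ᵥ X.col 1 * z 1 ^ 2 := by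
  have hcols : X *ᵥ z = z 0 • X.col 0 + z 1 • X.col 1 := by
    ext i
    simp [mulVec, dotProduct, Fin.sum_univ_two, mul_comm]
  have horth : (z 0 • X.col 0) ⬝ᵥ (z 1 • X.col 1) = 0 := by
    rw [smul_dotProduct, dotProduct_smul, hX, smul_zero, smul_zero]
  rw [hcols, add_dotProduct_add_self_of_dotProduct_eq_zero horth]
  simp only [smul_dotProduct, dotProduct_smul, smul_eq_mul]
  ring

variable [Field K]

/-- The least squares coefficient of a response `y` on a single regressor `u`, in the closed form
that makes sense over every field; it is `0` when `u ⬝ᵥ u = 0`. -/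
def regressionCoeff (u y : ι → K) : K :=
  (u ⬝ᵥ y) / (u ⬝ᵥ u)

theorem dotProduct_div_div_dotProduct_self_div {c : K} (hc : c ≠ 0) (u y : ι → K) :
    u ⬝ᵥ y / c / (u ⬝ᵥ u / c) = regressionCoeff u y :=
  div_div_div_cancel_right₀ hc _ _

theorem regressionCoeff_add_of_dotProduct_eq_zero {u v : ι → K} (huv : u ⬝ᵥ v = 0)
    (hu : u ⬝ᵥ u ≠ 0) (hv : v ⬝ᵥ v ≠ 0) (y : ι → K) :
    regressionCoeff (u + v) y =
      (u ⬝ᵥ u * regressionCoeff u y + v ⬝ᵥ v * regressionCoeff v y) / (u ⬝ᵥ u + v ⬝ᵥ v) := by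
  simp only [regressionCoeff, mul_div_cancel₀ _ hu, mul_div_cancel₀ _ hv, add_dotProduct u v y,
    add_dotProduct_add_self_of_dotProduct_eq_zero huv]

theorem mul_sub_weightedMean_sq_add_mul_sub_weightedMean_sq {w₁ w₂ : K} (hw : w₁ + w₂ ≠ 0)
    (a b : K) :
    w₁ * (a - (w₁ * a + w₂ * b) / (w₁ + w₂)) ^ 2 + w₂ * (b - (w₁ * a + w₂ * b) / (w₁ + w₂)) ^ 2 =
      w₁ * w₂ / (w₁ + w₂) * (a - b) ^ 2 := by
  field_simp
  ring

theorem sum_sq_mulVec_sub_mulVec_of_orthogonal_cols {X : Matrix ι (Fin 2) K}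
    (hX : X.col 0 ⬝ᵥ X.col 1 = 0) (h₀ : X.col 0 ⬝ᵥ X.col 0 ≠ 0) (h₁ : X.col 1 ⬝ᵥ X.col 1 ≠ 0)
    (hadd : (X.col 0 + X.col 1) ⬝ᵥ (X.col 0 + X.col 1) ≠ 0) (y : ι → K) {β βN : Fin 2 → K}
    (hβ : ∀ j, β j = regressionCoeff (X.col j) y)
    (hβN : ∀ j, βN j = regressionCoeff (X.col 0 + X.col 1) y) :
    ∑ i, ((X *ᵥ β) i - (X *ᵥ βN) i) ^ 2 =
      (X.col 0 ⬝ᵥ X.col 0) * (X.col 1 ⬝ᵥ X.col 1) /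
        ((X.col 0 + X.col 1) ⬝ᵥ (X.col 0 + X.col 1)) * (β 0 - β 1) ^ 2 := by
  have hmean (j : Fin 2) : βN j =
      (X.col 0 ⬝ᵥ X.col 0 * β 0 + X.col 1 ⬝ᵥ X.col 1 * β 1) /
        (X.col 0 ⬝ᵥ X.col 0 + X.col 1 ⬝ᵥ X.col 1) := by
    rw [hβN, hβ, hβ, regressionCoeff_add_of_dotProduct_eq_zero hX h₀ h₁]
  have hnorm := add_dotProduct_add_self_of_dotProduct_eq_zero hX
  calc ∑ i, ((X *ᵥ β) i - (X *ᵥ βN) i) ^ 2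
      = X *ᵥ (β - βN) ⬝ᵥ X *ᵥ (β - βN) := by
        simp only [mulVec_sub, dotProduct, Pi.sub_apply, sq]
    _ = X.col 0 ⬝ᵥ X.col 0 * (β 0 - βN 0) ^ 2 + X.col 1 ⬝ᵥ X.col 1 * (β 1 - βN 1) ^ 2 :=
        mulVec_dotProduct_mulVec_self_of_orthogonal_cols hX (β - βN)
    _ = _ := by
        rw [hmean, hmean, hnorm,
          mul_sub_weightedMean_sq_add_mul_sub_weightedMean_sq (hnorm ▸ hadd)]

end OrthogonalRegressors

section MixtureDesign

open Matrix

variable {ι R K : Type*}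

/-- The mixture design with covariate `x` and two groups, the indices satisfying `p` and those not
satisfying it: a separate slope for each group, so column `0` of `X` is `x` on the first group and
column `1` is `x` on the second. -/
def IsMixtureDesign [Zero R] (p : ι → Prop) (x : ι → R) (X : Matrix ι (Fin 2) R) : Prop :=
  ∀ i, (p i → X i 0 = x i ∧ X i 1 = 0) ∧ (¬p i → X i 0 = 0 ∧ X i 1 = x i)

namespace IsMixtureDesign

variable [NonUnitalNonAssocSemiring R] {p : ι → Prop} {x : ι → R} {X : Matrix ι (Fin 2) R}

theorem col_zero [DecidablePred p] (hX : IsMixtureDesign p x X) :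
    X.col 0 = fun i ↦ if p i then x i else 0 := by
  ext i
  by_cases hi : p i <;> simp [hX i, hi]

theorem col_one [DecidablePred p] (hX : IsMixtureDesign p x X) :
    X.col 1 = fun i ↦ if ¬p i then x i else 0 := by
  ext i
  by_cases hi : p i <;> simp [hX i, hi]

theorem col_zero_add_col_one (hX : IsMixtureDesign p x X) : X.col 0 + X.col 1 = x := by
  ext i
  by_cases hi : p i <;> simp [hX i, hi]

theorem col_zero_dotProduct_col_one [Fintype ι] (hX : IsMixtureDesign p x X) :
    X.col 0 ⬝ᵥ X.col 1 = 0 :=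
  Finset.sum_eq_zero fun i _ ↦ by by_cases hi : p i <;> simp [hX i, hi]

end IsMixtureDesign

variable [Fintype ι]

theorem ite_dotProduct [NonUnitalNonAssocSemiring R] (p : ι → Prop) [DecidablePred p]
    (x y : ι → R) :
    (fun i ↦ if p i then x i else 0) ⬝ᵥ y = ∑ i, if p i then x i * y i else 0 := by
  simp only [dotProduct, ite_mul, zero_mul]

theorem ite_dotProduct_ite_self [Semiring R] (p : ι → Prop) [DecidablePred p] (x : ι → R) :
    (fun i ↦ if p i then x i else 0) ⬝ᵥ (fun i ↦ if p i then x i else 0) =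
      ∑ i, if p i then x i ^ 2 else 0 := by
  simp only [dotProduct, ite_mul_ite, mul_zero, sq]

theorem stmt6_general [Field K] [LinearOrder K] [IsStrictOrderedRing K]
    (p : ι → Prop) [DecidablePred p] {n₁ n₂ n : K} (hn : n ≠ 0) {x y : ι → K}
    {X : Matrix ι (Fin 2) K} (hX : IsMixtureDesign p x X)
    {x2bar1 x2bar2 x2bar xybar1 xybar2 xybar : K}
    (hx2bar1 : x2bar1 = (∑ i, if p i then x i ^ 2 else 0) / n₁)
    (hx2bar2 : x2bar2 = (∑ i, if ¬p i then x i ^ 2 else 0) / n₂)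
    (hx2bar : x2bar = (∑ i, x i ^ 2) / n)
    (hxybar1 : xybar1 = (∑ i, if p i then x i * y i else 0) / n₁)
    (hxybar2 : xybar2 = (∑ i, if ¬p i then x i * y i else 0) / n₂)
    (hxybar : xybar = (∑ i, x i * y i) / n)
    (hne1 : x2bar1 ≠ 0) (hne2 : x2bar2 ≠ 0) {β βN : Fin 2 → K}
    (hβ0 : β 0 = xybar1 / x2bar1) (hβ1 : β 1 = xybar2 / x2bar2)
    (hβN0 : βN 0 = xybar / x2bar) (hβN1 : βN 1 = xybar / x2bar) :
    ∑ i, ((X *ᵥ β) i - (X *ᵥ βN) i) ^ 2 =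
      n₁ * x2bar1 * (n₂ * x2bar2) / (n * x2bar) * (β 0 - β 1) ^ 2 := by
  rw [← ite_dotProduct_ite_self, ← hX.col_zero] at hx2bar1
  rw [← ite_dotProduct_ite_self, ← hX.col_one] at hx2bar2
  rw [← ite_dotProduct, ← hX.col_zero] at hxybar1
  rw [← ite_dotProduct, ← hX.col_one] at hxybar2
  have hadd := hX.col_zero_add_col_one
  replace hx2bar : x2bar = (x ⬝ᵥ x) / n := by simpa only [dotProduct, ← sq] using hx2bar
  obtain ⟨h₀, hn₁⟩ := div_ne_zero_iff.mp (hx2bar1 ▸ hne1)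
  obtain ⟨h₁, hn₂⟩ := div_ne_zero_iff.mp (hx2bar2 ▸ hne2)
  have hx : x ⬝ᵥ x ≠ 0 := by
    intro hx
    rw [hX.col_zero, ite_dotProduct_ite_self, dotProduct_self_eq_zero.mp hx] at h₀
    simp at h₀
  have hβ : ∀ j, β j = regressionCoeff (X.col j) y := Fin.forall_fin_two.mpr
    ⟨by rw [hβ0, hxybar1, hx2bar1, dotProduct_div_div_dotProduct_self_div hn₁],
      by rw [hβ1, hxybar2, hx2bar2, dotProduct_div_div_dotProduct_self_div hn₂]⟩
  have hnull : xybar / x2bar = regressionCoeff (X.col 0 + X.col 1) y := by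
    rw [hadd, hxybar, hx2bar, ← dotProduct, dotProduct_div_div_dotProduct_self_div hn]
  have hβN : ∀ j, βN j = regressionCoeff (X.col 0 + X.col 1) y :=
    Fin.forall_fin_two.mpr ⟨hβN0.trans hnull, hβN1.trans hnull⟩
  rw [sum_sq_mulVec_sub_mulVec_of_orthogonal_cols hX.col_zero_dotProduct_col_one h₀ h₁
    (hadd ▸ hx) y hβ hβN, hadd, hx2bar1, hx2bar2, hx2bar, mul_div_cancel₀ _ hn₁,
    mul_div_cancel₀ _ hn₂, mul_div_cancel₀ _ hn]

end MixtureDesign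

/-- In the mixture design with `n = n₁ + n₂` and design matrix `X ∈ ℝ^{n×2}` whose first
column is `x_i` on group 1 (`i < n₁`, zero elsewhere) and second column is `x_i` on
group 2, assuming `x̄²₁ > 0` and `x̄²₂ > 0`, the least squares estimates under the
alternative (`β̂ = (x̄y₁/x̄²₁, x̄y₂/x̄²₂)`) and under the null `β₁ = β₂`
(`β̂^N` with both coordinates `x̄y/x̄²`) satisfy
`‖Xβ̂ − Xβ̂^N‖² = (n₁x̄²₁ · n₂x̄²₂)/(n·x̄²) · (β̂₁ − β̂₂)²`. -/
theorem stmt6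
    (n₁ n₂ n : ℕ) (hn₁ : 0 < n₁) (hn₂ : 0 < n₂) (hn : n = n₁ + n₂)
    (x y : Fin n → ℝ)
    (X : Matrix (Fin n) (Fin 2) ℝ)
    (hX : ∀ i : Fin n,
      (((i : ℕ) < n₁ → X i 0 = x i ∧ X i 1 = 0) ∧
       (n₁ ≤ (i : ℕ) → X i 0 = 0 ∧ X i 1 = x i)))
    (x2bar1 x2bar2 x2bar xybar1 xybar2 xybar : ℝ)
    (hx2bar1 : x2bar1 = (∑ i : Fin n, if (i : ℕ) < n₁ then x i ^ 2 else 0) / n₁)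
    (hx2bar2 : x2bar2 = (∑ i : Fin n, if n₁ ≤ (i : ℕ) then x i ^ 2 else 0) / n₂)
    (hx2bar : x2bar = (∑ i : Fin n, x i ^ 2) / n)
    (hxybar1 : xybar1 = (∑ i : Fin n, if (i : ℕ) < n₁ then x i * y i else 0) / n₁)
    (hxybar2 : xybar2 = (∑ i : Fin n, if n₁ ≤ (i : ℕ) then x i * y i else 0) / n₂)
    (hxybar : xybar = (∑ i : Fin n, x i * y i) / n)
    (hpos1 : 0 < x2bar1) (hpos2 : 0 < x2bar2)
    (βhat βhatN : Fin 2 → ℝ)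
    (hβhat1 : βhat 0 = xybar1 / x2bar1) (hβhat2 : βhat 1 = xybar2 / x2bar2)
    (hβhatN1 : βhatN 0 = xybar / x2bar) (hβhatN2 : βhatN 1 = xybar / x2bar) :
    ∑ i, (X.mulVec βhat i - X.mulVec βhatN i) ^ 2
      = ((n₁ : ℝ) * x2bar1 * ((n₂ : ℝ) * x2bar2)) / ((n : ℝ) * x2bar)
          * (βhat 0 - βhat 1) ^ 2 := by
  simp only [← not_lt] at hX hx2bar2 hxybar2
  exact stmt6_general (fun i : Fin n ↦ (i : ℕ) < n₁) (Nat.cast_ne_zero.mpr (by lia)) hX hx2bar1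
    hx2bar2 hx2bar hxybar1 hxybar2 hxybar hpos1.ne' hpos2.ne' hβhat1 hβhat2 hβhatN1 hβhatN2
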